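/- ∫₀¹ [₂F₁(−1/3,1/3;1|x)]²·(1−x)^{−1/2} dx = (3/√π)·[ (√3/128)·(Γ(1/3)/√π)⁹·₄F₃(−1/2,1/6,1/3,4/3; −1/6,5/6,5/3 | 1) + (80/21)·(√π/Γ(1/3))⁹·₄F₃(−7/6,−1/2,−1/3,2/3; −5/6,1/6,1/3 | 1) ]. -/

import Mathlib

open Real MeasureTheory Set

/-- Modified Bessel function `I₀(t) = (1/π)∫₀^π exp(t cos θ) dθ`. -/
noncomputable def I0 (t : ℝ) : ℝ := (1 / π) * ∫ θ in (0:ℝ)..π, exp (t * cos θ)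

/-- Modified Bessel function `K₀(t) = ∫₀^∞ exp(−t cosh u) du`. -/
noncomputable def K0 (t : ℝ) : ℝ := ∫ u in Ioi (0:ℝ), exp (-(t * Real.cosh u))

/-- Rising factorial `(a)ₙ = a(a+1)⋯(a+n−1)`. -/
noncomputable def ris (a : ℝ) (n : ℕ) : ℝ := ∏ k ∈ Finset.range n, (a + k)

/-- Generalized hypergeometric series `ₚF_q(a; b | x)`. -/
noncomputable def pFq (a b : List ℝ) (x : ℝ) : ℝ :=
  ∑' n : ℕ, ((a.map fun p => ris p n).prod / (b.map fun q => ris q n).prod) * x ^ n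
    / (n.factorial : ℝ)

/-!
Put `G(y) = ₂F₁(-α, α; 1 | 1 - y)`. By Gauss's theorem the Mellin transform of `G` on `[0, 1]` is
`φ(s) = Γ(s) Γ(s + 1) / (Γ(s + 1 + α) Γ(s + 1 - α))`. The integral `∫₀¹ G(y)² y^(-1/2) dy` is
recovered from `φ` by a lattice version of Parseval's formula,
`∑ₙ [Φ(β + n) - Φ(-β + n)] = 4π / sin(2πβ) · ∫₀¹ G(y)² y^(-1/2) dy`, `Φ(s) = φ(s) φ(1/2 - s)`,
where `n` runs over `ℤ`. If `G` is replaced by a combination of the functions `y ^ k` and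
`y ^ k log y`, this is the partial fraction expansion of the cotangent: double poles contribute
terms even in `β`, which cancel. The partial products of `φ` are Mellin transforms of such
combinations, and they converge weakly enough for the formula to pass to the limit. At `β = α` the
reciprocal Gamma factors make both lattice sums one-sided, and they become the two `₄F₃` series;
`α = 1/3` gives the stated constants.
-/

open Filter Topology

lemma summable_one_div_add_int_sq (β : ℝ) : Summable fun n : ℤ => 1 / (β + n) ^ 2 := by
  refine ((Real.summable_one_div_int_add_rpow β 2).mpr one_lt_two).congr fun n => ?_
  rw [rpow_two, sq_abs, add_comm]

lemma summable_one_div_abs_add_int_mul (β γ : ℝ) :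
    Summable fun n : ℤ => 1 / (|β + n| * |γ + n|) := by
  refine Summable.of_nonneg_of_le (fun n => by positivity) (fun n => ?_)
    ((summable_one_div_add_int_sq β).add (summable_one_div_add_int_sq γ))
  rw [← sq_abs (β + n), ← sq_abs (γ + n), one_div, mul_inv, one_div, one_div, ← inv_pow, ← inv_pow]
  nlinarith [sq_nonneg (|β + n|⁻¹ - |γ + n|⁻¹), sq_nonneg |β + n|⁻¹, sq_nonneg |γ + n|⁻¹]

lemma hasSum_one_div_sub_add_one_div_add {β : ℝ} (hβ : ∀ n : ℤ, β ≠ n) :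
    HasSum (fun n : ℕ => 1 / (β - (n + 1)) + 1 / (β + (n + 1))) (π * cot (π * β) - 1 / β) := by
  have hmem : (β : ℂ) ∈ Complex.integerComplement := by
    rintro ⟨n, hn⟩
    exact hβ n (by exact_mod_cast hn.symm)
  have hcomplex := (summable_cotTerm hmem).hasSum
  rw [← Complex.hasSum_ofReal]
  convert hcomplex using 1
  · ext n
    simp [cotTerm]
  · push_cast
    exact cot_series_rep' hmem

-- The two series diverge separately; their difference is absolutely convergent.
lemma hasSum_one_div_add_int_sub_one_div_add_int {β γ : ℝ} (hβ : ∀ n : ℤ, β ≠ n)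
    (hγ : ∀ n : ℤ, γ ≠ n) :
    HasSum (fun n : ℤ => 1 / (β + n) - 1 / (γ + n)) (π * cot (π * β) - π * cot (π * γ)) := by
  have add_int_ne_zero {x : ℝ} (hx : ∀ n : ℤ, x ≠ n) (n : ℤ) : x + n ≠ 0 := fun h =>
    hx (-n) (by push_cast; linarith)
  have hsummable : Summable fun n : ℤ => 1 / (β + n) - 1 / (γ + n) := by
    refine .of_norm (((summable_one_div_abs_add_int_mul β γ).mul_left |γ - β|).congr fun n => ?_)
    rw [norm_eq_abs, ← abs_mul, mul_one_div, ← abs_div,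
      div_sub_div _ _ (add_int_ne_zero hβ n) (add_int_ne_zero hγ n)]
    ring_nf
  have hsplit := (hasSum_nat_add_iff' 1).mpr hsummable.hasSum.nat_add_neg
  have hcot := ((hasSum_one_div_sub_add_one_div_add hβ).sub
    (hasSum_one_div_sub_add_one_div_add hγ)).unique (hsplit.congr_fun fun n => by push_cast; ring)
  have hvalue : π * cot (π * β) - π * cot (π * γ) = ∑' n : ℤ, (1 / (β + n) - 1 / (γ + n)) := by
    simp only [Finset.range_one, Finset.sum_singleton, Nat.cast_zero, Int.cast_zero, neg_zero,
      add_zero] at hcot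
    linarith
  exact hvalue ▸ hsummable.hasSum

lemma hasSum_comp_add_int {F : ℝ → ℝ} {β S : ℝ} (h : HasSum (fun n : ℤ => F (β + n)) S) (m : ℤ) :
    HasSum (fun n : ℤ => F (β + m + n)) S :=
  ((Equiv.addLeft m).hasSum_iff.mpr h).congr_fun fun n => by simp [add_assoc]

lemma hasSum_comp_neg_int {F : ℝ → ℝ} {β S : ℝ} (h : HasSum (fun n : ℤ => F (β + n)) S) :
    HasSum (fun n : ℤ => F (β - n)) S :=
  ((Equiv.neg ℤ).hasSum_iff.mpr h).congr_fun fun n => by simp [sub_eq_add_neg]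

/-- The part of the lattice sum `∑ F(β + n)`, `n ∈ ℤ`, that is odd in `β`, paired term by term so
that contributions even in `β` cancel. -/
def HasOddLatticeSum (F : ℝ → ℝ) (β S : ℝ) : Prop :=
  HasSum (fun n : ℤ => F (β + n) - F (-β + n)) S

namespace HasOddLatticeSum

variable {F G : ℝ → ℝ} {β S T : ℝ}

lemma add (hF : HasOddLatticeSum F β S) (hG : HasOddLatticeSum G β T) :
    HasOddLatticeSum (fun s => F s + G s) β (S + T) :=
  (HasSum.add hF hG).congr_fun fun n => by ring

lemma const_mul (c : ℝ) (hF : HasOddLatticeSum F β S) :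
    HasOddLatticeSum (fun s => c * F s) β (c * S) :=
  (HasSum.mul_left c hF).congr_fun fun n => by ring

lemma congr_off_half_int (hβ : ∀ n : ℤ, 2 * β ≠ n) (hF : HasOddLatticeSum F β S)
    (h : ∀ s : ℝ, (∀ n : ℤ, 2 * s ≠ n) → F s = G s) (hST : S = T) : HasOddLatticeSum G β T := by
  refine hST ▸ HasSum.congr_fun hF fun n => ?_
  rw [h _ fun m hm => hβ (m - 2 * n) (by push_cast; linarith),
    h _ fun m hm => hβ (2 * n - m) (by push_cast; linarith)]

end HasOddLatticeSum

lemma hasOddLatticeSum_one_div_half_int_add_sq (β : ℝ) (m : ℤ) :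
    HasOddLatticeSum (fun s => 1 / (s + m / 2) ^ 2) β 0 := by
  have hsum := (summable_one_div_add_int_sq (β + m / 2)).hasSum
  have hreflect := hasSum_comp_neg_int (F := fun s => 1 / s ^ 2)
    (hasSum_comp_add_int (F := fun s => 1 / s ^ 2) hsum (-m))
  refine sub_self (∑' n : ℤ, 1 / (β + m / 2 + n) ^ 2) ▸ (hsum.sub hreflect).congr_fun fun n => ?_
  push_cast
  rw [← neg_sq (-β + n + m / 2)]
  ring_nf

lemma cot_pi_mul_add_int (β : ℝ) (n : ℤ) : cot (π * (β + n)) = cot (π * β) := by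
  rw [show π * (β + n) = π * β + n * π by ring, cot_eq_cos_div_sin, cot_eq_cos_div_sin,
    cos_add_int_mul_pi, sin_add_int_mul_pi,
    mul_div_mul_left _ _ (zpow_ne_zero n (neg_ne_zero.mpr one_ne_zero))]

lemma cot_add_tan {x : ℝ} (hx : sin (2 * x) ≠ 0) : cot x + tan x = 2 / sin (2 * x) := by
  rw [sin_two_mul] at hx ⊢
  have hsin : sin x ≠ 0 := fun h => hx (by rw [h]; ring)
  have hcos : cos x ≠ 0 := fun h => hx (by rw [h]; ring)
  rw [cot_eq_cos_div_sin, tan_eq_sin_div_cos]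
  field_simp
  linarith [sin_sq_add_cos_sq x]

lemma sin_two_pi_mul_ne_zero {β : ℝ} (hβ : ∀ n : ℤ, 2 * β ≠ n) : sin (2 * (π * β)) ≠ 0 := by
  rw [sin_ne_zero_iff]
  intro n hn
  exact hβ n (mul_left_cancel₀ pi_ne_zero (by linarith))

-- The partial fractions of `1 / ((s + k) (1/2 - s + j))` give `π cot πβ - π cot π(β - 1/2)`.
lemma hasSum_one_div_add_mul_half_sub {β : ℝ} (hβ : ∀ n : ℤ, 2 * β ≠ n) (k j : ℕ) :
    HasSum (fun n : ℤ => 1 / ((β + n + k) * (1 / 2 - (β + n) + j)))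
      (2 * π / sin (2 * (π * β)) / (k + j + 1 / 2)) := by
  have hk : ∀ n : ℤ, β + k ≠ n := fun n h => hβ (2 * n - 2 * k) (by push_cast; linarith)
  have hj : ∀ n : ℤ, β - 1 / 2 - j ≠ n := fun n h => hβ (2 * n + 1 + 2 * j) (by push_cast; linarith)
  have hcot_k : cot (π * (β + k)) = cot (π * β) := mod_cast cot_pi_mul_add_int β k
  have hcot_j : cot (π * (β - 1 / 2 - j)) = -tan (π * β) := by
    have hperiod := cot_pi_mul_add_int (β - 1 / 2) (-j)
    push_cast at hperiod
    rw [sub_eq_add_neg (β - 1 / 2), hperiod, cot_eq_cos_div_sin, tan_eq_sin_div_cos,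
      show π * (β - 1 / 2) = π * β - π / 2 by ring, cos_sub_pi_div_two, sin_sub_pi_div_two, div_neg]
  have hcot := (hasSum_one_div_add_int_sub_one_div_add_int hk hj).div_const (k + j + 1 / 2 : ℝ)
  rw [hcot_k, hcot_j, mul_neg, sub_neg_eq_add, ← mul_add, cot_add_tan (sin_two_pi_mul_ne_zero hβ),
    ← mul_div_assoc, mul_comm π 2] at hcot
  refine hcot.congr_fun fun n => ?_
  have hk' : β + k + n ≠ 0 := fun h => hk (-n) (by push_cast; linarith)
  have hj' : β - 1 / 2 - j + n ≠ 0 := fun h => hj (-n) (by push_cast; linarith)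
  have hd : (k + j + 1 / 2 : ℝ) ≠ 0 := by positivity
  rw [show β + n + k = β + k + n by ring, show 1 / 2 - (β + n) + j = -(β - 1 / 2 - j + n) by ring,
    div_sub_div _ _ hk' hj', div_div, div_eq_div_iff (mul_ne_zero hk' (neg_ne_zero.mpr hj'))
      (mul_ne_zero (mul_ne_zero hk' hj') hd)]
  ring

lemma hasOddLatticeSum_one_div_add_mul_half_sub {β : ℝ} (hβ : ∀ n : ℤ, 2 * β ≠ n) (k j : ℕ) :
    HasOddLatticeSum (fun s => 1 / ((s + k) * (1 / 2 - s + j))) β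
      (4 * π / sin (2 * (π * β)) / (k + j + 1 / 2)) := by
  have hneg : ∀ n : ℤ, 2 * -β ≠ n := fun n h => hβ (-n) (by push_cast; linarith)
  have hvalue : 4 * π / sin (2 * (π * β)) / (k + j + 1 / 2) =
      2 * π / sin (2 * (π * β)) / (k + j + 1 / 2) -
        2 * π / sin (2 * (π * -β)) / (k + j + 1 / 2) := by
    rw [mul_neg, mul_neg, sin_neg]
    ring
  rw [HasOddLatticeSum, hvalue]
  exact (hasSum_one_div_add_mul_half_sub hβ k j).sub (hasSum_one_div_add_mul_half_sub hneg k j)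

/-- The Mellin transform `∫₀¹ y^(s-1) f(y) dy` of `f` restricted to the unit interval. The pairing
`∫₀¹ f(y) g(y) y^(-1/2) dy` is `unitMellin (f * g) (1 / 2)`. -/
noncomputable def unitMellin (f : ℝ → ℝ) (s : ℝ) : ℝ := ∫ y in (0 : ℝ)..1, y ^ (s - 1) * f y

section UnitMellin

variable {f g : ℝ → ℝ} {s : ℝ}

lemma intervalIntegrable_rpow_mul (hf : ContinuousOn f (Icc 0 1)) (hs : 0 < s) :
    IntervalIntegrable (fun y => y ^ (s - 1) * f y) volume 0 1 :=
  (intervalIntegral.intervalIntegrable_rpow' (by linarith)).mul_continuousOn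
    (by rwa [uIcc_of_le zero_le_one])

lemma unitMellin_add (hf : ContinuousOn f (Icc 0 1)) (hg : ContinuousOn g (Icc 0 1)) (hs : 0 < s) :
    unitMellin (fun y => f y + g y) s = unitMellin f s + unitMellin g s := by
  simp only [unitMellin, mul_add]
  exact intervalIntegral.integral_add (intervalIntegrable_rpow_mul hf hs)
    (intervalIntegrable_rpow_mul hg hs)

lemma unitMellin_const_mul (c : ℝ) (f : ℝ → ℝ) (s : ℝ) :
    unitMellin (fun y => c * f y) s = c * unitMellin f s := by
  simp only [unitMellin, mul_left_comm _ c]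
  exact intervalIntegral.integral_const_mul ..

lemma unitMellin_pow_mul (k : ℕ) (f : ℝ → ℝ) (s : ℝ) :
    unitMellin (fun y => y ^ k * f y) s = unitMellin f (s + k) := by
  refine intervalIntegral.integral_congr_ae (ae_of_all _ fun y hy => ?_)
  rw [uIoc_of_le zero_le_one] at hy
  rw [← mul_assoc, add_sub_right_comm, rpow_add_natCast hy.1.ne']

-- Substitute `y = exp (-t)`.
lemma unitMellin_neg_log_pow (hs : 0 < s) (m : ℕ) :
    unitMellin (fun y => (-log y) ^ m) s = m.factorial / s ^ (m + 1) := by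
  have himage : (fun t => exp (-t)) '' Ioi 0 = Ioo 0 1 := by
    ext y
    constructor
    · rintro ⟨t, ht, rfl⟩
      exact ⟨exp_pos _, exp_lt_one_iff.mpr (neg_lt_zero.mpr ht)⟩
    · rintro ⟨h0, h1⟩
      exact ⟨-log y, neg_pos.mpr (log_neg h0 h1), by simp [exp_log h0]⟩
  have hderiv : ∀ t ∈ Ioi (0 : ℝ), HasDerivWithinAt (fun t => exp (-t)) (-exp (-t)) (Ioi 0) t :=
    fun t _ => by simpa using (hasDerivAt_neg t).exp.hasDerivWithinAt
  have hinj : InjOn (fun t : ℝ => exp (-t)) (Ioi 0) :=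
    (exp_injective.comp neg_injective).injOn
  have hgamma := integral_rpow_mul_exp_neg_mul_Ioi (a := m + 1) (by positivity) hs
  rw [unitMellin, intervalIntegral.integral_of_le zero_le_one, integral_Ioc_eq_integral_Ioo,
    ← himage, integral_image_eq_integral_abs_deriv_smul measurableSet_Ioi hderiv hinj]
  calc ∫ t in Ioi (0 : ℝ), |-exp (-t)| • (exp (-t) ^ (s - 1) * (-log (exp (-t))) ^ m)
      = ∫ t in Ioi (0 : ℝ), t ^ ((m + 1 : ℝ) - 1) * exp (-(s * t)) := by
        refine setIntegral_congr_fun measurableSet_Ioi fun t _ => ?_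
        simp only [abs_neg, abs_exp, log_exp, neg_neg, add_sub_cancel_right, rpow_natCast,
          smul_eq_mul, ← exp_mul, ← mul_assoc, ← exp_add]
        ring_nf
    _ = m.factorial / s ^ (m + 1) := by
        rw [hgamma, Gamma_nat_eq_factorial, ← Nat.cast_succ, rpow_natCast, one_div, inv_pow,
          ← div_eq_inv_mul]

end UnitMellin

/-- `MellinPair N f φ`: `f` is a linear combination of the functions `y ^ k` for `k ≤ N` and
`-y ^ k log y` for `1 ≤ k ≤ N`, and `φ` is the corresponding combination of `1 / (s + k)` and
`1 / (s + k) ^ 2`, its Mellin transform on the unit interval. The values of `φ` at the nonpositive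
integers, where poles may be, are unconstrained. -/
inductive MellinPair (N : ℕ) : (ℝ → ℝ) → (ℝ → ℝ) → Prop
  | pow_mul_neg_log_pow (k m : ℕ) (hkN : k ≤ N) (hmk : m ≤ k) (hm : m ≤ 1) :
      MellinPair N (fun y => y ^ k * (-log y) ^ m) (fun s => 1 / (s + k) ^ (m + 1))
  | add {f g φ γ : ℝ → ℝ} (hf : MellinPair N f φ) (hg : MellinPair N g γ) :
      MellinPair N (fun y => f y + g y) (fun s => φ s + γ s)
  | const_mul {f φ : ℝ → ℝ} (c : ℝ) (hf : MellinPair N f φ) :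
      MellinPair N (fun y => c * f y) (fun s => c * φ s)
  | congr {f φ γ : ℝ → ℝ} (hf : MellinPair N f φ)
      (h : ∀ s : ℝ, (∀ k : ℕ, s + k ≠ 0) → φ s = γ s) : MellinPair N f γ

lemma continuous_pow_mul_neg_log_pow {k m : ℕ} (hmk : m ≤ k) :
    Continuous fun y : ℝ => y ^ k * (-log y) ^ m := by
  have hfactor (y : ℝ) : y ^ k * (-log y) ^ m = y ^ (k - m) * (-(y * log y)) ^ m := by
    rw [← mul_neg, mul_pow, ← mul_assoc, ← pow_add, Nat.sub_add_cancel hmk]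
  simp only [hfactor]
  exact (continuous_pow _).mul (continuous_mul_log.neg.pow m)

namespace MellinPair

variable {N M : ℕ} {f g φ γ : ℝ → ℝ}

protected lemma continuous (hf : MellinPair N f φ) : Continuous f := by
  induction hf with
  | pow_mul_neg_log_pow k m _ hmk _ => exact continuous_pow_mul_neg_log_pow hmk
  | add _ _ ihf ihg => exact ihf.add ihg
  | const_mul c _ ih => exact continuous_const.mul ih
  | congr _ _ ih => exact ih

lemma mono (hNM : N ≤ M) (hf : MellinPair N f φ) : MellinPair M f φ := by
  induction hf with
  | pow_mul_neg_log_pow k m hkN hmk hm => exact .pow_mul_neg_log_pow k m (hkN.trans hNM) hmk hm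
  | add _ _ ihf ihg => exact ihf.add ihg
  | const_mul c _ ih => exact ih.const_mul c
  | congr _ h ih => exact ih.congr h

lemma unitMellin_eq (hf : MellinPair N f φ) {s : ℝ} (hs : 0 < s) : unitMellin f s = φ s := by
  induction hf with
  | pow_mul_neg_log_pow k m _ _ hm =>
    rw [unitMellin_pow_mul, unitMellin_neg_log_pow (by positivity), Nat.factorial_eq_one.mpr hm,
      Nat.cast_one]
  | add hf hg ihf ihg =>
    rw [unitMellin_add hf.continuous.continuousOn hg.continuous.continuousOn hs, ihf, ihg]
  | const_mul c _ ih => rw [unitMellin_const_mul, ih]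
  | congr _ h ih => exact ih.trans (h s fun k => by positivity)

lemma exists_pow_mul_neg_log_pow_mul_one_div_sq {k m p : ℕ} (hkp : k < p) (hmk : m ≤ k)
    (hm : m ≤ 1) : ∃ g, MellinPair p g fun s => 1 / (s + k) ^ (m + 1) * (1 / (s + p) ^ 2) := by
  obtain ⟨d, hd, rfl⟩ : ∃ d : ℕ, 0 < d ∧ p = k + d := ⟨p - k, by omega, by omega⟩
  have hold := pow_mul_neg_log_pow (N := k + d) k 0 hkp.le (Nat.zero_le _) zero_le_one
  have hnew := pow_mul_neg_log_pow (N := k + d) (k + d) 0 le_rfl (Nat.zero_le _) zero_le_one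
  have hnew_log := pow_mul_neg_log_pow (N := k + d) (k + d) 1 le_rfl (by omega) le_rfl
  rcases Nat.le_one_iff_eq_zero_or_eq_one.mp hm with rfl | rfl
  · refine ⟨_, (((hold.const_mul (1 / (d : ℝ) ^ 2)).add (hnew.const_mul (-1 / (d : ℝ) ^ 2))).add
      (hnew_log.const_mul (-1 / (d : ℝ)))).congr fun s hs => ?_⟩
    have hsk := hs k
    have hsp := hs (k + d)
    push_cast [← add_assoc] at hsp ⊢
    field_simp
    ring
  · have hold_log := pow_mul_neg_log_pow (N := k + d) k 1 hkp.le hmk le_rfl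
    refine ⟨_, (((hold_log.const_mul (1 / (d : ℝ) ^ 2)).add
      (hnew_log.const_mul (1 / (d : ℝ) ^ 2))).add ((hold.const_mul (-2 / (d : ℝ) ^ 3)).add
      (hnew.const_mul (2 / (d : ℝ) ^ 3)))).congr fun s hs => ?_⟩
    have hsk := hs k
    have hsp := hs (k + d)
    push_cast [← add_assoc] at hsp ⊢
    field_simp
    ring

lemma exists_mul_one_div_sq (hf : MellinPair N f φ) {p : ℕ} (hNp : N < p) :
    ∃ g, MellinPair p g fun s => φ s * (1 / (s + p) ^ 2) := by
  induction hf with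
  | pow_mul_neg_log_pow k m hkN hmk hm =>
    exact exists_pow_mul_neg_log_pow_mul_one_div_sq (hkN.trans_lt hNp) hmk hm
  | add _ _ ihf ihg =>
    obtain ⟨f', hf'⟩ := ihf
    obtain ⟨g', hg'⟩ := ihg
    exact ⟨_, (hf'.add hg').congr fun s _ => by ring⟩
  | const_mul c _ ih =>
    obtain ⟨f', hf'⟩ := ih
    exact ⟨_, (hf'.const_mul c).congr fun s _ => by ring⟩
  | congr _ h ih =>
    obtain ⟨f', hf'⟩ := ih
    exact ⟨f', hf'.congr fun s hs => by rw [h s hs]⟩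

end MellinPair

lemma hasOddLatticeSum_one_div_add_natCast_sq (β : ℝ) (k : ℕ) :
    HasOddLatticeSum (fun s => 1 / (s + k) ^ 2) β 0 := by
  have h := hasOddLatticeSum_one_div_half_int_add_sq β (2 * k)
  push_cast at h
  simpa only [mul_div_cancel_left₀ (k : ℝ) two_ne_zero] using h

lemma hasOddLatticeSum_one_div_half_sub_add_natCast_sq (β : ℝ) (j : ℕ) :
    HasOddLatticeSum (fun s => 1 / (1 / 2 - s + j) ^ 2) β 0 := by
  refine HasSum.congr_fun (hasOddLatticeSum_one_div_half_int_add_sq β (-(2 * j + 1))) fun n => ?_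
  push_cast
  rw [← neg_sq (1 / 2 - (β + n) + j), ← neg_sq (1 / 2 - (-β + n) + j)]
  ring_nf

lemma unitMellin_pow_mul_neg_log_pow_mul (k m j l : ℕ) :
    unitMellin (fun y => y ^ k * (-log y) ^ m * (y ^ j * (-log y) ^ l)) (1 / 2) =
      (m + l).factorial / (k + j + 1 / 2) ^ (m + l + 1) := by
  have hmonomial : (fun y : ℝ => y ^ k * (-log y) ^ m * (y ^ j * (-log y) ^ l)) =
      fun y => y ^ (k + j) * (-log y) ^ (m + l) := by
    ext y
    ring
  rw [hmonomial, unitMellin_pow_mul, unitMellin_neg_log_pow (by positivity)]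
  push_cast
  rw [add_comm (1 / 2 : ℝ)]

lemma one_div_mul_one_div_sq {A B : ℝ} (hA : A ≠ 0) (hB : B ≠ 0) (hAB : A + B ≠ 0) :
    1 / A * (1 / B ^ 2) = 1 / (A + B) * (1 / (A * B) + 1 / B ^ 2) := by
  field_simp
  ring

lemma one_div_sq_mul_one_div {A B : ℝ} (hA : A ≠ 0) (hB : B ≠ 0) (hAB : A + B ≠ 0) :
    1 / A ^ 2 * (1 / B) = 1 / (A + B) * (1 / (A * B) + 1 / A ^ 2) := by
  field_simp

lemma one_div_sq_mul_one_div_sq {A B : ℝ} (hA : A ≠ 0) (hB : B ≠ 0) (hAB : A + B ≠ 0) :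
    1 / A ^ 2 * (1 / B ^ 2) =
      1 / (A + B) ^ 2 * (2 * (1 / (A * B)) + (1 / A ^ 2 + 1 / B ^ 2)) := by
  field_simp
  ring

-- Partial fractions reduce every case to simple poles: double poles have odd lattice sum zero.
lemma hasOddLatticeSum_pow_mul_neg_log_pow {β : ℝ} (hβ : ∀ n : ℤ, 2 * β ≠ n) (k j : ℕ)
    {m l : ℕ} (hm : m ≤ 1) (hl : l ≤ 1) :
    HasOddLatticeSum (fun s => 1 / (s + k) ^ (m + 1) * (1 / (1 / 2 - s + j) ^ (l + 1))) β
      (4 * π / sin (2 * (π * β)) *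
        unitMellin (fun y => y ^ k * (-log y) ^ m * (y ^ j * (-log y) ^ l)) (1 / 2)) := by
  have hsimple := hasOddLatticeSum_one_div_add_mul_half_sub hβ k j
  have hleft := hasOddLatticeSum_one_div_add_natCast_sq β k
  have hright := hasOddLatticeSum_one_div_half_sub_add_natCast_sq β j
  have hdenom {s : ℝ} (hs : ∀ n : ℤ, 2 * s ≠ n) : s + k ≠ 0 ∧ 1 / 2 - s + j ≠ 0 :=
    ⟨fun h => hs (-(2 * k)) (by push_cast; linarith),
      fun h => hs (2 * j + 1) (by push_cast; linarith)⟩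
  have hd0 : (k + j + 1 / 2 : ℝ) ≠ 0 := by positivity
  have hd (s : ℝ) : (k + j + 1 / 2 : ℝ) = s + k + (1 / 2 - s + j) := by ring
  rw [unitMellin_pow_mul_neg_log_pow_mul]
  generalize (k + j + 1 / 2 : ℝ) = d at hsimple hd0 hd ⊢
  rcases Nat.le_one_iff_eq_zero_or_eq_one.mp hm with rfl | rfl <;>
    rcases Nat.le_one_iff_eq_zero_or_eq_one.mp hl with rfl | rfl
  · refine hsimple.congr_off_half_int hβ (fun s _ => ?_) ?_
    · rw [one_div_mul_one_div, zero_add, pow_one, pow_one]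
    · simp [div_eq_mul_inv]
  · refine ((hsimple.add hright).const_mul (1 / d)).congr_off_half_int hβ (fun s hs => ?_) ?_
    · rw [hd s, zero_add, pow_one, one_div_mul_one_div_sq (hdenom hs).1 (hdenom hs).2 (hd s ▸ hd0)]
    · simp [field]
  · refine ((hsimple.add hleft).const_mul (1 / d)).congr_off_half_int hβ (fun s hs => ?_) ?_
    · rw [hd s, zero_add, pow_one, one_div_sq_mul_one_div (hdenom hs).1 (hdenom hs).2 (hd s ▸ hd0)]
    · simp [field]
  · refine (((hsimple.const_mul 2).add (hleft.add hright)).const_mul (1 / d ^ 2)).congr_off_half_int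
      hβ (fun s hs => ?_) ?_
    · rw [hd s, one_div_sq_mul_one_div_sq (hdenom hs).1 (hdenom hs).2 (hd s ▸ hd0)]
    · simp [field]

theorem MellinPair.hasOddLatticeSum_mul {N M : ℕ} {f g φ γ : ℝ → ℝ} (hf : MellinPair N f φ)
    (hg : MellinPair M g γ) {β : ℝ} (hβ : ∀ n : ℤ, 2 * β ≠ n) :
    HasOddLatticeSum (fun s => φ s * γ (1 / 2 - s)) β
      (4 * π / sin (2 * (π * β)) * unitMellin (fun y => f y * g y) (1 / 2)) := by
  have hhalf : (0 : ℝ) < 1 / 2 := one_half_pos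
  induction hf with
  | pow_mul_neg_log_pow k m _ hmk hm =>
    have hk := continuous_pow_mul_neg_log_pow hmk
    induction hg with
    | pow_mul_neg_log_pow j l _ _ hl =>
      exact hasOddLatticeSum_pow_mul_neg_log_pow hβ k j hm hl
    | add hg hg' ih ih' =>
      refine (ih.add ih').congr_off_half_int hβ (fun s _ => by ring) ?_
      simp only [mul_add]
      rw [unitMellin_add (hk.fun_mul hg.continuous).continuousOn
        (hk.fun_mul hg'.continuous).continuousOn hhalf, mul_add]
    | const_mul c _ ih =>
      refine (ih.const_mul c).congr_off_half_int hβ (fun s _ => by ring) ?_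
      simp only [mul_left_comm _ c]
      rw [unitMellin_const_mul, mul_left_comm]
    | congr _ h ih =>
      refine ih.congr_off_half_int hβ (fun s hs => ?_) rfl
      rw [h (1 / 2 - s) fun i hi => hs (2 * i + 1) (by push_cast; linarith)]
  | add hf hf' ih ih' =>
    refine (ih.add ih').congr_off_half_int hβ (fun s _ => by ring) ?_
    simp only [add_mul]
    rw [unitMellin_add (hf.continuous.fun_mul hg.continuous).continuousOn
      (hf'.continuous.fun_mul hg.continuous).continuousOn hhalf, mul_add]
  | const_mul c _ ih =>
    refine (ih.const_mul c).congr_off_half_int hβ (fun s _ => by ring) ?_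
    simp only [mul_assoc c]
    rw [unitMellin_const_mul, mul_left_comm]
  | congr _ h ih =>
    refine ih.congr_off_half_int hβ (fun s hs => ?_) rfl
    rw [h s fun i hi => hs (-(2 * i)) (by push_cast; linarith)]

section Ris

lemma ris_succ (a : ℝ) (n : ℕ) : ris a (n + 1) = ris a n * (a + n) :=
  Finset.prod_range_succ ..

lemma ris_succ_left (a : ℝ) (n : ℕ) : ris a (n + 1) = a * ris (a + 1) n := by
  rw [ris, Finset.prod_range_succ', Nat.cast_zero, add_zero, mul_comm, ris]
  congr 1
  exact Finset.prod_congr rfl fun k _ => by push_cast; ring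

lemma ris_one (n : ℕ) : ris 1 n = n.factorial := by
  rw [ris, ← Finset.prod_range_add_one_eq_factorial]
  push_cast
  exact Finset.prod_congr rfl fun k _ => add_comm ..

lemma ris_pos {a : ℝ} (ha : 0 < a) (n : ℕ) : 0 < ris a n :=
  Finset.prod_pos fun k _ => by positivity

lemma ris_ne_zero {a : ℝ} (ha : ∀ k : ℕ, a + k ≠ 0) (n : ℕ) : ris a n ≠ 0 :=
  Finset.prod_ne_zero_iff.mpr fun k _ => ha k

lemma ris_sub_natCast (a : ℝ) (n : ℕ) : ris (a - n) n = (-1) ^ n * ris (1 - a) n := by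
  induction n generalizing a with
  | zero => simp [ris]
  | succ n ih =>
    rw [ris_succ, Nat.cast_succ, ← sub_sub, sub_right_comm, ih, ris_succ_left]
    ring_nf

end Ris

section Gamma

-- Valid at the poles as well, where Mathlib's `Gamma` is `0`.
lemma inv_Gamma_eq_mul_inv_Gamma_add_one (x : ℝ) : (Gamma x)⁻¹ = x * (Gamma (x + 1))⁻¹ := by
  rcases eq_or_ne x 0 with rfl | hx
  · rw [Gamma_zero, inv_zero, zero_mul]
  · rw [Gamma_add_one hx, mul_inv, mul_inv_cancel_left₀ hx]

lemma inv_Gamma_eq_ris_mul (x : ℝ) (n : ℕ) : (Gamma x)⁻¹ = ris x n * (Gamma (x + n))⁻¹ := by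
  induction n with
  | zero => simp [ris]
  | succ n ih =>
    rw [ih, inv_Gamma_eq_mul_inv_Gamma_add_one (x + n), ris_succ, Nat.cast_succ, mul_assoc,
      add_assoc x]

lemma inv_Gamma_sub_natCast (x : ℝ) (n : ℕ) :
    (Gamma (x - n))⁻¹ = (-1) ^ n * ris (1 - x) n * (Gamma x)⁻¹ := by
  rw [inv_Gamma_eq_ris_mul (x - n) n, sub_add_cancel, ris_sub_natCast]

lemma tendsto_inv_GammaSeq (x : ℝ) :
    Tendsto (fun n => (GammaSeq x n)⁻¹) atTop (𝓝 (Gamma x)⁻¹) := by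
  by_cases hx : Gamma x = 0
  · obtain ⟨m, rfl⟩ := (Gamma_eq_zero_iff x).mp hx
    rw [hx, inv_zero]
    refine tendsto_const_nhds.congr' ?_
    filter_upwards [eventually_ge_atTop m] with n hn
    have hzero : ∏ j ∈ Finset.range (n + 1), (-(m : ℝ) + j) = 0 :=
      Finset.prod_eq_zero (Finset.mem_range.mpr (Nat.lt_succ_of_le hn)) (neg_add_cancel _)
    rw [GammaSeq, hzero, div_zero, inv_zero]
  · exact (GammaSeq_tendsto_Gamma x).inv₀ hx

end Gamma

/-- The Mellin transform of `y ↦ ₂F₁(-α, α; 1 | 1 - y)` on the unit interval, in closed form. Where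
a `Gamma` in the denominator has a pole, its value `0` and `x / 0 = 0` give the correct zero. -/
noncomputable def gaussMellin (α s : ℝ) : ℝ :=
  Gamma s * Gamma (s + 1) / (Gamma (s + 1 + α) * Gamma (s + 1 - α))

/-- The `N`-th partial product of `gaussMellin α s`, a rational function of `s`. -/
noncomputable def truncatedGaussMellin (α : ℝ) (N : ℕ) (s : ℝ) : ℝ :=
  1 / s * ∏ k ∈ Finset.range N, (1 - α ^ 2 / (s + (k + 1 : ℕ)) ^ 2)

section GaussMellin

lemma gaussMellin_neg (α s : ℝ) : gaussMellin (-α) s = gaussMellin α s := by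
  rw [gaussMellin, gaussMellin, ← sub_eq_add_neg, sub_neg_eq_add, mul_comm (Gamma (s + 1 - α))]

lemma exists_mellinPair_truncatedGaussMellin (α : ℝ) (N : ℕ) :
    ∃ f, MellinPair N f (truncatedGaussMellin α N) := by
  induction N with
  | zero =>
    exact ⟨_, (MellinPair.pow_mul_neg_log_pow 0 0 le_rfl le_rfl zero_le_one).congr fun s _ => by
      simp [truncatedGaussMellin]⟩
  | succ N ih =>
    obtain ⟨f, hf⟩ := ih
    obtain ⟨g, hg⟩ := hf.exists_mul_one_div_sq (Nat.lt_succ_self N)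
    refine ⟨_, ((hf.mono (Nat.le_succ N)).add (hg.const_mul (-α ^ 2))).congr fun s _ => ?_⟩
    simp only [truncatedGaussMellin, Finset.prod_range_succ]
    ring

lemma truncatedGaussMellin_eq_ris (α : ℝ) (N : ℕ) {s : ℝ} (hs : ∀ k : ℕ, s + k ≠ 0) :
    truncatedGaussMellin α N s =
      1 / s * (ris (s + 1 + α) N * ris (s + 1 - α) N / ris (s + 1) N ^ 2) := by
  rw [truncatedGaussMellin, ris, ris, ris, ← Finset.prod_mul_distrib, ← Finset.prod_pow,
    ← Finset.prod_div_distrib]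
  congr 1
  refine Finset.prod_congr rfl fun k _ => ?_
  have hk := hs (k + 1)
  rw [show s + 1 + k = s + (k + 1 : ℕ) by push_cast; ring, eq_div_iff (pow_ne_zero 2 hk), sub_mul,
    div_mul_cancel₀ _ (pow_ne_zero 2 hk)]
  push_cast
  ring

lemma tendsto_truncatedGaussMellin (α : ℝ) {s : ℝ} (hs : ∀ k : ℕ, s + k ≠ 0) :
    Tendsto (fun N => truncatedGaussMellin α N s) atTop (𝓝 (gaussMellin α s)) := by
  have hs0 : s ≠ 0 := by simpa using hs 0
  have hlim := (((GammaSeq_tendsto_Gamma (s + 1)).pow 2).mul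
    ((tendsto_inv_GammaSeq (s + 1 + α)).mul (tendsto_inv_GammaSeq (s + 1 - α)))).const_mul (1 / s)
  have hvalue : 1 / s * (Gamma (s + 1) ^ 2 * ((Gamma (s + 1 + α))⁻¹ * (Gamma (s + 1 - α))⁻¹)) =
      gaussMellin α s := by
    rw [gaussMellin, ← mul_inv, ← div_eq_mul_inv, sq, Gamma_add_one hs0]
    field_simp
  rw [hvalue] at hlim
  refine (tendsto_add_atTop_iff_nat 1).mp (hlim.congr' ?_)
  filter_upwards [eventually_gt_atTop 0] with n hn
  have hn' : (0 : ℝ) < n := Nat.cast_pos.mpr hn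
  have hpow : (n : ℝ) ^ (s + 1 + α) * (n : ℝ) ^ (s + 1 - α) = ((n : ℝ) ^ (s + 1)) ^ 2 := by
    rw [← rpow_add hn', sq, ← rpow_add hn']
    ring_nf
  have hpow0 : (n : ℝ) ^ (s + 1) ≠ 0 := (rpow_pos_of_pos hn' _).ne'
  have hfact : (n.factorial : ℝ) ≠ 0 := by positivity
  have hunfold (x : ℝ) : GammaSeq x n = (n : ℝ) ^ x * n.factorial / ris x (n + 1) := rfl
  rw [truncatedGaussMellin_eq_ris α _ hs, hunfold, hunfold, hunfold, ← mul_inv, div_mul_div_comm,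
    mul_mul_mul_comm, hpow, div_pow, mul_pow]
  field_simp

lemma abs_truncatedGaussMellin_add_int_le (α β : ℝ) (N : ℕ) (n : ℤ) :
    |truncatedGaussMellin α N (β + n)| ≤
      exp (α ^ 2 * ∑' m : ℤ, 1 / (β + m) ^ 2) * (1 / |β + n|) := by
  have hsum : ∑ k ∈ Finset.range N, α ^ 2 / (β + n + (k + 1 : ℕ)) ^ 2 ≤
      α ^ 2 * ∑' m : ℤ, 1 / (β + m) ^ 2 := by
    have hinj : Function.Injective fun k : ℕ => n + (k + 1 : ℕ) := fun a b h => by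
      simpa using h
    have hle := (summable_one_div_add_int_sq β).sum_le_tsum
      ((Finset.range N).map ⟨_, hinj⟩) fun m _ => by positivity
    refine le_trans (le_of_eq ?_) (mul_le_mul_of_nonneg_left hle (sq_nonneg α))
    rw [Finset.sum_map, Finset.mul_sum]
    refine Finset.sum_congr rfl fun k _ => ?_
    simp only [Function.Embedding.coeFn_mk]
    push_cast
    ring
  rw [truncatedGaussMellin, abs_mul, abs_div, abs_one, mul_comm, Finset.abs_prod]
  refine mul_le_mul_of_nonneg_right ?_ (by positivity)
  calc ∏ k ∈ Finset.range N, |1 - α ^ 2 / (β + n + (k + 1 : ℕ)) ^ 2|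
      ≤ ∏ k ∈ Finset.range N, (1 + α ^ 2 / (β + n + (k + 1 : ℕ)) ^ 2) := by
        refine Finset.prod_le_prod (fun _ _ => abs_nonneg _) fun k _ => ?_
        refine (abs_sub _ _).trans_eq ?_
        rw [abs_one, abs_of_nonneg (by positivity)]
    _ ≤ exp (∑ k ∈ Finset.range N, α ^ 2 / (β + n + (k + 1 : ℕ)) ^ 2) :=
        prod_one_add_le_exp_sum _ fun k => by positivity
    _ ≤ exp (α ^ 2 * ∑' m : ℤ, 1 / (β + m) ^ 2) := exp_le_exp.mpr hsum

end GaussMellin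

section WeakConvergence

variable {f g F : ℝ → ℝ} {s : ℝ}

lemma unitMellin_one (hs : 0 < s) : unitMellin (fun _ => 1) s = 1 / s := by
  simpa using unitMellin_neg_log_pow hs 0

lemma unitMellin_mono (hf : ContinuousOn f (Icc 0 1)) (hg : ContinuousOn g (Icc 0 1)) (hs : 0 < s)
    (hfg : ∀ y ∈ Icc (0 : ℝ) 1, f y ≤ g y) : unitMellin f s ≤ unitMellin g s :=
  intervalIntegral.integral_mono_on zero_le_one (intervalIntegrable_rpow_mul hf hs)
    (intervalIntegrable_rpow_mul hg hs) fun y hy =>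
      mul_le_mul_of_nonneg_left (hfg y hy) (rpow_nonneg hy.1 _)

lemma abs_unitMellin_le (hf : ContinuousOn f (Icc 0 1)) (hg : ContinuousOn g (Icc 0 1)) (hs : 0 < s)
    (hfg : ∀ y ∈ Icc (0 : ℝ) 1, |f y| ≤ g y) : |unitMellin f s| ≤ unitMellin g s := by
  have hneg : -unitMellin g s = unitMellin (fun y => -1 * g y) s := by
    rw [unitMellin_const_mul, neg_one_mul]
  refine abs_le.mpr ⟨hneg.le.trans ?_, unitMellin_mono hf hg hs fun y hy => le_of_abs_le (hfg y hy)⟩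
  refine unitMellin_mono (continuousOn_const.mul hg) hf hs fun y hy => ?_
  linarith [neg_le_of_abs_le (hfg y hy)]

lemma unitMellin_abs_le_one_div_add_unitMellin_mul_self (hf : ContinuousOn f (Icc 0 1))
    (hs : 0 < s) : unitMellin (fun y => |f y|) s ≤ 1 / s + unitMellin (fun y => f y * f y) s := by
  rw [← unitMellin_one hs, ← unitMellin_add continuousOn_const (hf.fun_mul hf) hs]
  refine unitMellin_mono hf.abs (continuousOn_const.add (hf.fun_mul hf)) hs fun y _ => ?_
  nlinarith [abs_mul_abs_self (f y), sq_nonneg (|f y| - 1), abs_nonneg (f y)]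

variable {ι : Type*} {l : Filter ι} {u : ι → ℝ → ℝ}

lemma tendsto_unitMellin_mul_polynomial (hs : 0 < s) (hu : ∀ i, ContinuousOn (u i) (Icc 0 1))
    (hF : ContinuousOn F (Icc 0 1))
    (hmoment : ∀ k : ℕ, Tendsto (fun i => unitMellin (u i) (s + k)) l (𝓝 (unitMellin F (s + k))))
    (p : Polynomial ℝ) :
    Tendsto (fun i => unitMellin (fun y => p.eval y * u i y) s) l
      (𝓝 (unitMellin (fun y => p.eval y * F y) s)) := by
  induction p using Polynomial.induction_on' with
  | add p q hp hq =>
    have hadd (v : ℝ → ℝ) (hv : ContinuousOn v (Icc 0 1)) :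
        unitMellin (fun y => (p + q).eval y * v y) s =
          unitMellin (fun y => p.eval y * v y) s + unitMellin (fun y => q.eval y * v y) s := by
      simp only [Polynomial.eval_add, add_mul]
      exact unitMellin_add (p.continuous.continuousOn.mul hv) (q.continuous.continuousOn.mul hv) hs
    rw [hadd F hF]
    simpa only [hadd _ (hu _)] using hp.add hq
  | monomial k a =>
    simp only [Polynomial.eval_monomial, mul_assoc, unitMellin_const_mul, unitMellin_pow_mul]
    exact (hmoment k).const_mul a

lemma abs_unitMellin_mul_sub_le (hf : ContinuousOn f (Icc 0 1)) (hg : ContinuousOn g (Icc 0 1))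
    (hs : 0 < s) {p : ℝ → ℝ} (hp : ContinuousOn p (Icc 0 1)) {ε : ℝ}
    (hpg : ∀ y ∈ Icc (0 : ℝ) 1, |p y - g y| ≤ ε) :
    |unitMellin (fun y => p y * f y) s - unitMellin (fun y => g y * f y) s| ≤
      ε * unitMellin (fun y => |f y|) s := by
  have hsplit : unitMellin (fun y => p y * f y) s =
      unitMellin (fun y => (p y - g y) * f y) s + unitMellin (fun y => g y * f y) s := by
    rw [← unitMellin_add ((hp.fun_sub hg).fun_mul hf) (hg.fun_mul hf) hs]
    simp only [sub_mul, sub_add_cancel]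
  rw [hsplit, add_sub_cancel_right, ← unitMellin_const_mul]
  refine abs_unitMellin_le ((hp.sub hg).mul hf) (continuousOn_const.mul hf.abs) hs fun y hy => ?_
  rw [abs_mul]
  exact mul_le_mul_of_nonneg_right (hpg y hy) (abs_nonneg _)

lemma tendsto_unitMellin_mul_of_tendsto_moments (hs : 0 < s)
    (hu : ∀ i, ContinuousOn (u i) (Icc 0 1)) (hF : ContinuousOn F (Icc 0 1))
    (hg : ContinuousOn g (Icc 0 1)) {C : ℝ} (hC : ∀ i, unitMellin (fun y => |u i y|) s ≤ C)
    (hmoment : ∀ k : ℕ, Tendsto (fun i => unitMellin (u i) (s + k)) l (𝓝 (unitMellin F (s + k)))) :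
    Tendsto (fun i => unitMellin (fun y => g y * u i y) s) l
      (𝓝 (unitMellin (fun y => g y * F y) s)) := by
  refine Metric.tendsto_nhds.mpr fun ε hε => ?_
  set K := |C| + |unitMellin (fun y => |F y|) s| + 1
  have hKpos : 0 < K := by positivity
  obtain ⟨p, hp⟩ := exists_polynomial_near_of_continuousOn 0 1 g hg (ε / (3 * K)) (by positivity)
  have hnear (v : ℝ → ℝ) (hv : ContinuousOn v (Icc 0 1)) (hvK : unitMellin (fun y => |v y|) s ≤ K) :
      |unitMellin (fun y => p.eval y * v y) s - unitMellin (fun y => g y * v y) s| ≤ ε / 3 :=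
    (abs_unitMellin_mul_sub_le hv hg hs p.continuous.continuousOn fun y hy => (hp y hy).le).trans <|
      (mul_le_mul_of_nonneg_left hvK (by positivity)).trans_eq (by field_simp)
  have hpoly := tendsto_unitMellin_mul_polynomial hs hu hF hmoment p
  filter_upwards [Metric.tendsto_nhds.mp hpoly (ε / 3) (by positivity)] with i hi
  have hui := hnear (u i) (hu i) (by
    linarith [hC i, le_abs_self C, abs_nonneg (unitMellin (fun y => |F y|) s)])
  have hFi := hnear F hF (by linarith [le_abs_self (unitMellin (fun y => |F y|) s), abs_nonneg C])
  rw [dist_eq] at hi ⊢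
  rw [abs_lt] at hi ⊢
  rw [abs_le] at hui hFi
  constructor <;> linarith

end WeakConvergence

/-- The terms of the odd lattice sum of `s ↦ φ s * γ (1 / 2 - s)` at `β`. -/
noncomputable def oddLatticeTerm (φ γ : ℝ → ℝ) (β : ℝ) (n : ℤ) : ℝ :=
  φ (β + n) * γ (1 / 2 - (β + n)) - φ (-β + n) * γ (1 / 2 - (-β + n))

/-- `φ s` decays at least like `1 / |s|` along every lattice `β + ℤ` away from the half-integers,
with a constant `B β` depending on the lattice. -/
def LatticeDominated (B φ : ℝ → ℝ) : Prop :=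
  ∀ β : ℝ, (∀ n : ℤ, 2 * β ≠ n) → ∀ n : ℤ, |φ (β + n)| ≤ B β * (1 / |β + n|)

/-- A summable majorant of `oddLatticeTerm φ γ β` for `φ` and `γ` dominated by `B`. -/
noncomputable def oddLatticeBound (B : ℝ → ℝ) (β : ℝ) (n : ℤ) : ℝ :=
  B β * B (1 / 2 - β) * (1 / (|β + n| * |β - 1 / 2 + n|)) +
    B (-β) * B (1 / 2 + β) * (1 / (|-β + n| * |-β - 1 / 2 + n|))

lemma summable_oddLatticeBound (B : ℝ → ℝ) (β : ℝ) : Summable (oddLatticeBound B β) :=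
  ((summable_one_div_abs_add_int_mul _ _).mul_left _).add
    ((summable_one_div_abs_add_int_mul _ _).mul_left _)

section DoubleLimit

variable {B φ γ : ℝ → ℝ} {β : ℝ}

lemma LatticeDominated.abs_mul_le (hφ : LatticeDominated B φ) (hγ : LatticeDominated B γ)
    (hβ : ∀ n : ℤ, 2 * β ≠ n) (n : ℤ) :
    |φ (β + n) * γ (1 / 2 - (β + n))| ≤
      B β * B (1 / 2 - β) * (1 / (|β + n| * |β - 1 / 2 + n|)) := by
  have hβ' : ∀ m : ℤ, 2 * (1 / 2 - β) ≠ m := fun m h => hβ (1 - m) (by push_cast; linarith)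
  have hleft := hφ β hβ n
  have hright := hγ (1 / 2 - β) hβ' (-n)
  have habs : |1 / 2 - β + (-n : ℤ)| = |β - 1 / 2 + n| := by
    rw [← abs_neg]
    push_cast
    ring_nf
  rw [habs, show 1 / 2 - β + (-n : ℤ) = 1 / 2 - (β + n) by push_cast; ring] at hright
  rw [abs_mul]
  refine (mul_le_mul hleft hright (abs_nonneg _) ((abs_nonneg _).trans hleft)).trans_eq ?_
  rw [mul_mul_mul_comm, one_div_mul_one_div]

lemma LatticeDominated.norm_oddLatticeTerm_le (hφ : LatticeDominated B φ)
    (hγ : LatticeDominated B γ) (hβ : ∀ n : ℤ, 2 * β ≠ n) (n : ℤ) :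
    ‖oddLatticeTerm φ γ β n‖ ≤ oddLatticeBound B β n := by
  have hneg : ∀ m : ℤ, 2 * -β ≠ m := fun m h => hβ (-m) (by push_cast; linarith)
  refine (abs_sub _ _).trans (add_le_add (hφ.abs_mul_le hγ hβ n) ?_)
  simpa only [sub_neg_eq_add] using hφ.abs_mul_le hγ hneg n

variable {ι : Type*} {l : Filter ι} {φs γs : ι → ℝ → ℝ}

lemma LatticeDominated.of_tendsto [l.NeBot] (hφs : ∀ i, LatticeDominated B (φs i))
    (hlim : ∀ s : ℝ, (∀ n : ℤ, 2 * s ≠ n) → Tendsto (fun i => φs i s) l (𝓝 (φ s))) :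
    LatticeDominated B φ := fun β hβ n =>
  le_of_tendsto (hlim _ fun m h => hβ (m - 2 * n) (by push_cast; linarith)).abs
    (Eventually.of_forall fun i => hφs i β hβ n)

lemma tendsto_tsum_oddLatticeTerm (hφs : ∀ i, LatticeDominated B (φs i))
    (hγs : ∀ i, LatticeDominated B (γs i))
    (hφ : ∀ s : ℝ, (∀ n : ℤ, 2 * s ≠ n) → Tendsto (fun i => φs i s) l (𝓝 (φ s)))
    (hγ : ∀ s : ℝ, (∀ n : ℤ, 2 * s ≠ n) → Tendsto (fun i => γs i s) l (𝓝 (γ s)))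
    (hβ : ∀ n : ℤ, 2 * β ≠ n) :
    Tendsto (fun i => ∑' n, oddLatticeTerm (φs i) (γs i) β n) l
      (𝓝 (∑' n, oddLatticeTerm φ γ β n)) := by
  refine tendsto_tsum_of_dominated_convergence (summable_oddLatticeBound B β) (fun n => ?_)
    (Eventually.of_forall fun i n => (hφs i).norm_oddLatticeTerm_le (hγs i) hβ n)
  exact ((hφ _ fun m h => hβ (m - 2 * n) (by push_cast; linarith)).mul
      (hγ _ fun m h => hβ (1 - 2 * n - m) (by push_cast; linarith))).sub
    ((hφ _ fun m h => hβ (2 * n - m) (by push_cast; linarith)).mul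
      (hγ _ fun m h => hβ (m - 1 + 2 * n) (by push_cast; linarith)))

lemma MellinPair.unitMellin_mul_eq_tsum {N M : ℕ} {f g : ℝ → ℝ} (hf : MellinPair N f φ)
    (hg : MellinPair M g γ) (hβ : ∀ n : ℤ, 2 * β ≠ n) :
    unitMellin (fun y => f y * g y) (1 / 2) =
      sin (2 * (π * β)) / (4 * π) * ∑' n, oddLatticeTerm φ γ β n := by
  have hsum : ∑' n, oddLatticeTerm φ γ β n = _ := (hf.hasOddLatticeSum_mul hg hβ).tsum_eq
  rw [hsum, ← inv_div (4 * π),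
    inv_mul_cancel_left₀ (div_ne_zero (by positivity) (sin_two_pi_mul_ne_zero hβ))]

lemma MellinPair.unitMellin_abs_le {N : ℕ} {f : ℝ → ℝ} (hf : MellinPair N f φ)
    (hφ : LatticeDominated B φ) (hβ : ∀ n : ℤ, 2 * β ≠ n) :
    unitMellin (fun y => |f y|) (1 / 2) ≤
      1 / (1 / 2) + |sin (2 * (π * β)) / (4 * π)| * ∑' n, oddLatticeBound B β n := by
  have hterm := hφ.norm_oddLatticeTerm_le hφ hβ
  refine (unitMellin_abs_le_one_div_add_unitMellin_mul_self hf.continuous.continuousOn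
    one_half_pos).trans (add_le_add_right ?_ _)
  rw [hf.unitMellin_mul_eq_tsum hf hβ]
  refine (le_abs_self _).trans ?_
  rw [abs_mul]
  exact mul_le_mul_of_nonneg_left
    (tsum_of_norm_bounded (summable_oddLatticeBound B β).hasSum hterm) (abs_nonneg _)

-- The pairing is bilinear but only weakly continuous, so the two limits are taken one at a time.
theorem hasOddLatticeSum_mul_self_of_tendsto [l.NeBot] {N : ι → ℕ} {u : ι → ℝ → ℝ} {F : ℝ → ℝ}
    (hu : ∀ i, MellinPair (N i) (u i) (φs i)) (hφs : ∀ i, LatticeDominated B (φs i))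
    (hlim : ∀ s : ℝ, (∀ k : ℕ, s + k ≠ 0) → Tendsto (fun i => φs i s) l (𝓝 (φ s)))
    (hF : ContinuousOn F (Icc 0 1)) (hFφ : ∀ s, 0 < s → unitMellin F s = φ s)
    (hβ : ∀ n : ℤ, 2 * β ≠ n) :
    HasOddLatticeSum (fun s => φ s * φ (1 / 2 - s)) β
      (4 * π / sin (2 * (π * β)) * unitMellin (fun y => F y * F y) (1 / 2)) := by
  have hlim' : ∀ s : ℝ, (∀ n : ℤ, 2 * s ≠ n) → Tendsto (fun i => φs i s) l (𝓝 (φ s)) :=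
    fun s hs => hlim s fun k h => hs (-(2 * k)) (by push_cast; linarith)
  have hφ : LatticeDominated B φ := .of_tendsto hφs hlim'
  have hcont (i : ι) : ContinuousOn (u i) (Icc 0 1) := (hu i).continuous.continuousOn
  have hweak {g : ℝ → ℝ} (hg : ContinuousOn g (Icc 0 1)) :=
    tendsto_unitMellin_mul_of_tendsto_moments one_half_pos hcont hF hg
      (fun i => (hu i).unitMellin_abs_le (hφs i) hβ) fun k => by
        simpa only [hFφ _ (show (0 : ℝ) < 1 / 2 + k by positivity),
          (hu _).unitMellin_eq (show (0 : ℝ) < 1 / 2 + k by positivity)] using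
          hlim (1 / 2 + k) fun j => by positivity
  have hmixed (i : ι) : unitMellin (fun y => u i y * F y) (1 / 2) =
      sin (2 * (π * β)) / (4 * π) * ∑' n, oddLatticeTerm (φs i) φ β n := by
    refine tendsto_nhds_unique (hweak (hcont i)) ?_
    simp only [(hu i).unitMellin_mul_eq_tsum (hu _) hβ]
    exact (tendsto_tsum_oddLatticeTerm (fun _ => hφs i) hφs (fun s _ => tendsto_const_nhds) hlim'
      hβ).const_mul _
  have hvalue : unitMellin (fun y => F y * F y) (1 / 2) =
      sin (2 * (π * β)) / (4 * π) * ∑' n, oddLatticeTerm φ φ β n := by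
    refine tendsto_nhds_unique (hweak hF) ?_
    simp only [mul_comm (F _) (u _ _), hmixed]
    exact (tendsto_tsum_oddLatticeTerm hφs (fun _ => hφ) hlim' (fun s _ => tendsto_const_nhds)
      hβ).const_mul _
  have hsummable : Summable (oddLatticeTerm φ φ β) :=
    (summable_oddLatticeBound B β).of_norm_bounded (hφ.norm_oddLatticeTerm_le hφ hβ)
  rw [hvalue, ← inv_div (4 * π),
    mul_inv_cancel_left₀ (div_ne_zero (by positivity) (sin_two_pi_mul_ne_zero hβ))]
  exact hsummable.hasSum

end DoubleLimit

lemma hasOddLatticeSum_gaussMellin_mul_self {α β : ℝ} {F : ℝ → ℝ} (hF : ContinuousOn F (Icc 0 1))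
    (hFφ : ∀ s, 0 < s → unitMellin F s = gaussMellin α s) (hβ : ∀ n : ℤ, 2 * β ≠ n) :
    HasOddLatticeSum (fun s => gaussMellin α s * gaussMellin α (1 / 2 - s)) β
      (4 * π / sin (2 * (π * β)) * unitMellin (fun y => F y * F y) (1 / 2)) := by
  choose u hu using exists_mellinPair_truncatedGaussMellin α
  exact hasOddLatticeSum_mul_self_of_tendsto hu
    (fun N β _ n => abs_truncatedGaussMellin_add_int_le α β N n)
    (fun s hs => tendsto_truncatedGaussMellin α hs) hF hFφ hβ

/-- The terms of `₂F₁(-α, α; s + 1 | 1)`. -/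
noncomputable def gaussTerm (α s : ℝ) (n : ℕ) : ℝ :=
  ris (-α) n * ris α n / (n.factorial * ris (s + 1) n)

section GaussTerm

variable {s : ℝ}

lemma gaussTerm_zero (α s : ℝ) : gaussTerm α s 0 = 1 := by simp [gaussTerm, ris]

lemma gaussTerm_succ (α s : ℝ) (n : ℕ) :
    gaussTerm α s (n + 1) = gaussTerm α s n * ((n ^ 2 - α ^ 2) / ((n + 1) * (s + 1 + n))) := by
  rw [gaussTerm, gaussTerm, div_mul_div_comm, ris_succ, ris_succ, ris_succ, Nat.factorial_succ]
  push_cast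
  ring

lemma gaussTerm_add_one (α : ℝ) (hs : 0 ≤ s) (n : ℕ) :
    gaussTerm α (s + 1) n = gaussTerm α s n * ((s + 1) / (s + 1 + n)) := by
  have hshift : (s + 1) * ris (s + 1 + 1) n = ris (s + 1) n * (s + 1 + n) := by
    rw [← ris_succ_left, ris_succ]
  have hpos := ris_pos (show 0 < s + 1 by positivity) n
  have hpos' := ris_pos (show 0 < s + 1 + 1 by positivity) n
  rw [gaussTerm, gaussTerm, div_mul_div_comm, div_eq_div_iff (by positivity) (by positivity)]
  linear_combination (-(ris (-α) n * ris α n * n.factorial)) * hshift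

lemma summable_one_div_add_one_sq : Summable fun n : ℕ => 1 / ((n : ℝ) + 1) ^ 2 := by
  exact_mod_cast (summable_nat_add_iff 1).mpr (summable_one_div_nat_pow.mpr one_lt_two)

lemma abs_gaussTerm_succ_le_prod (α : ℝ) (hs : 0 ≤ s) (n : ℕ) :
    |gaussTerm α s (n + 1)| ≤ α ^ 2 * (∏ k ∈ Finset.range n, (1 + α ^ 2 * (1 / (k + 1) ^ 2))) *
      (1 / (s + 1) * (1 / ((n : ℝ) + 1) ^ 2)) := by
  induction n with
  | zero =>
    simp [gaussTerm_succ, gaussTerm_zero, div_eq_mul_inv, abs_mul,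
      abs_of_pos (show 0 < s + 1 by positivity)]
  | succ n ih =>
    have hratio : |(((n + 1 : ℕ) : ℝ) ^ 2 - α ^ 2) / (((n + 1 : ℕ) + 1) * (s + 1 + (n + 1 : ℕ)))| ≤
        ((n : ℝ) + 1) ^ 2 * (1 + α ^ 2 * (1 / (n + 1) ^ 2)) * (1 / ((n + 1 : ℕ) + 1) ^ 2) := by
      have hnum : |((n + 1 : ℕ) : ℝ) ^ 2 - α ^ 2| ≤
          ((n : ℝ) + 1) ^ 2 * (1 + α ^ 2 * (1 / (n + 1) ^ 2)) := by
        refine (abs_sub _ _).trans_eq ?_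
        rw [abs_of_nonneg (by positivity), abs_of_nonneg (by positivity)]
        push_cast
        field_simp
      rw [abs_div, div_eq_mul_one_div, abs_of_pos (show (0 : ℝ) < _ * _ by positivity)]
      refine mul_le_mul hnum (one_div_le_one_div_of_le (by positivity) ?_) (by positivity)
        (by positivity)
      push_cast
      nlinarith
    rw [gaussTerm_succ, abs_mul, Finset.prod_range_succ]
    refine (mul_le_mul ih hratio (abs_nonneg _) (by positivity)).trans_eq ?_
    field_simp

lemma exists_abs_gaussTerm_succ_le (α : ℝ) :
    ∃ K, 0 ≤ K ∧ ∀ s, 0 ≤ s → ∀ n : ℕ,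
      |gaussTerm α s (n + 1)| ≤ K * (1 / (s + 1) * (1 / ((n : ℝ) + 1) ^ 2)) := by
  refine ⟨α ^ 2 * exp (∑' k : ℕ, α ^ 2 * (1 / ((k : ℝ) + 1) ^ 2)), by positivity, fun s hs n =>
    (abs_gaussTerm_succ_le_prod α hs n).trans ?_⟩
  have hprod : ∏ k ∈ Finset.range n, (1 + α ^ 2 * (1 / ((k : ℝ) + 1) ^ 2)) ≤
      exp (∑' k : ℕ, α ^ 2 * (1 / ((k : ℝ) + 1) ^ 2)) :=
    (prod_one_add_le_exp_sum _ fun k => by positivity).trans <| exp_le_exp.mpr <|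
      (summable_one_div_add_one_sq.mul_left _).sum_le_tsum _ fun k _ => by positivity
  gcongr

lemma summable_abs_gaussTerm (α : ℝ) (hs : 0 ≤ s) : Summable fun n => |gaussTerm α s n| := by
  obtain ⟨K, -, hK⟩ := exists_abs_gaussTerm_succ_le α
  exact (summable_nat_add_iff 1).mp <| .of_nonneg_of_le (fun _ => abs_nonneg _) (hK s hs)
    ((summable_one_div_add_one_sq.mul_left _).mul_left _)

lemma tendsto_natCast_mul_gaussTerm (α : ℝ) (hs : 0 ≤ s) :
    Tendsto (fun n : ℕ => n * gaussTerm α s n) atTop (𝓝 0) := by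
  obtain ⟨K, -, hK⟩ := exists_abs_gaussTerm_succ_le α
  have hlim := (tendsto_one_div_add_atTop_nhds_zero_nat (𝕜 := ℝ)).const_mul (K * (1 / (s + 1)))
  rw [mul_zero] at hlim
  refine (tendsto_add_atTop_iff_nat 1).mp (squeeze_zero_norm (fun n => ?_) hlim)
  rw [norm_eq_abs, abs_mul, Nat.abs_cast]
  refine (mul_le_mul_of_nonneg_left (hK s hs n) (by positivity)).trans_eq ?_
  push_cast
  field_simp

-- The contiguous relation telescopes.
lemma tsum_gaussTerm_eq_mul_tsum_add_one (α : ℝ) (hs : 0 ≤ s) :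
    ∑' n, gaussTerm α s n = (1 - α ^ 2 / (s + 1) ^ 2) * ∑' n, gaussTerm α (s + 1) n := by
  have htelescope (K : ℕ) : ∑ n ∈ Finset.range K,
      ((s + 1) ^ 2 * gaussTerm α s n - ((s + 1) ^ 2 - α ^ 2) * gaussTerm α (s + 1) n) =
        -(s + 1) * (K * gaussTerm α s K) := by
    induction K with
    | zero => simp
    | succ K ih =>
      rw [Finset.sum_range_succ, ih, gaussTerm_add_one α hs, gaussTerm_succ]
      push_cast
      field_simp
      ring
  have hsum := (summable_abs_gaussTerm α hs).of_abs.hasSum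
  have hsum' := (summable_abs_gaussTerm α (show 0 ≤ s + 1 by positivity)).of_abs.hasSum
  have hlim := ((hsum.mul_left ((s + 1) ^ 2)).sub
    (hsum'.mul_left ((s + 1) ^ 2 - α ^ 2))).tendsto_sum_nat
  simp only [htelescope] at hlim
  have hzero := tendsto_nhds_unique hlim ((tendsto_natCast_mul_gaussTerm α hs).const_mul _)
  field_simp
  linarith

lemma tsum_gaussTerm_eq_prod_mul (α : ℝ) (hs : 0 ≤ s) (N : ℕ) :
    ∑' n, gaussTerm α s n = (∏ k ∈ Finset.range N, (1 - α ^ 2 / (s + (k + 1 : ℕ)) ^ 2)) *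
      ∑' n, gaussTerm α (s + N) n := by
  induction N with
  | zero => simp
  | succ N ih =>
    rw [ih, Finset.prod_range_succ, mul_assoc,
      tsum_gaussTerm_eq_mul_tsum_add_one α (show 0 ≤ s + N by positivity), Nat.cast_succ, add_assoc]

lemma tendsto_tsum_gaussTerm_atTop (α : ℝ) :
    Tendsto (fun s => ∑' n, gaussTerm α s n) atTop (𝓝 1) := by
  obtain ⟨K, hK0, hK⟩ := exists_abs_gaussTerm_succ_le α
  have hlim := ((tendsto_inv_atTop_zero (𝕜 := ℝ)).mul_const
    (K * ∑' n : ℕ, 1 / ((n : ℝ) + 1) ^ 2))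
  rw [zero_mul] at hlim
  refine tendsto_iff_norm_sub_tendsto_zero.mpr
    (squeeze_zero' (Eventually.of_forall fun _ => norm_nonneg _) ?_ hlim)
  filter_upwards [eventually_gt_atTop 0] with s hs
  rw [(summable_abs_gaussTerm α hs.le).of_abs.tsum_eq_zero_add, gaussTerm_zero, add_sub_cancel_left,
    mul_left_comm]
  have hbound := tsum_of_norm_bounded (f := fun n => gaussTerm α s (n + 1))
    ((summable_one_div_add_one_sq.mul_left (1 / (s + 1))).mul_left K).hasSum (hK s hs.le)
  rw [tsum_mul_left, tsum_mul_left] at hbound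
  refine hbound.trans (mul_le_mul_of_nonneg_left (mul_le_mul_of_nonneg_right ?_ ?_) hK0)
  · rw [one_div]
    exact inv_anti₀ hs (by linarith)
  · exact tsum_nonneg fun n => by positivity

-- Gauss's evaluation of `₂F₁(-α, α; s + 1 | 1)`.
theorem tsum_gaussTerm (α : ℝ) (hs : 0 < s) : ∑' n, gaussTerm α s n = s * gaussMellin α s := by
  have htail := (tendsto_tsum_gaussTerm_atTop α).comp
    (tendsto_atTop_add_const_left atTop s tendsto_natCast_atTop_atTop)
  have hlim := ((tendsto_truncatedGaussMellin α fun k => by positivity).const_mul s).mul htail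
  rw [mul_one] at hlim
  refine tendsto_nhds_unique (tendsto_const_nhds.congr fun N => ?_) hlim
  rw [tsum_gaussTerm_eq_prod_mul α hs.le N, truncatedGaussMellin, Function.comp_apply]
  field_simp

end GaussTerm

section GaussSeries

variable {s : ℝ}

lemma unitMellin_one_sub_pow (hs : 0 < s) (n : ℕ) :
    unitMellin (fun y => (1 - y) ^ n) s = n.factorial / ris s (n + 1) := by
  induction n generalizing s with
  | zero => simpa [ris] using unitMellin_one hs
  | succ n ih =>
    have hcont : Continuous fun y : ℝ => (1 - y) ^ n := by fun_prop
    have hsplit : unitMellin (fun y => (1 - y) ^ (n + 1)) s =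
        unitMellin (fun y => (1 - y) ^ n) s + -1 * unitMellin (fun y => (1 - y) ^ n) (s + 1) := by
      rw [← Nat.cast_one (R := ℝ), ← unitMellin_pow_mul, ← unitMellin_const_mul, Nat.cast_one,
        ← unitMellin_add hcont.continuousOn (Continuous.continuousOn (by fun_prop)) hs]
      ring_nf
    have hleft := ris_succ_left s (n + 1)
    have hright := ris_succ s (n + 1)
    have hpos' := ris_pos (show 0 < s + 1 by positivity) (n + 1)
    have heq : ris s (n + 1) = s * ris (s + 1) (n + 1) / (s + (n + 1 : ℕ)) := by
      rw [eq_div_iff (by positivity), ← hright, hleft]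
    rw [hsplit, ih hs, ih (by positivity), hleft, heq, Nat.factorial_succ]
    push_cast
    field_simp
    ring

lemma pFq_neg_self_one_eq_tsum (α x : ℝ) :
    pFq [-α, α] [1] x = ∑' n, gaussTerm α 0 n * x ^ n := by
  refine tsum_congr fun n => ?_
  simp only [gaussTerm, List.map_cons, List.map_nil, List.prod_cons, List.prod_nil, mul_one,
    ris_one, zero_add]
  field_simp

lemma norm_gaussTerm_mul_pow_le (α : ℝ) (n : ℕ) {y : ℝ} (hy : y ∈ Icc (0 : ℝ) 1) :
    ‖gaussTerm α 0 n * (1 - y) ^ n‖ ≤ |gaussTerm α 0 n| := by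
  rw [norm_eq_abs, abs_mul, abs_pow]
  exact mul_le_of_le_one_right (abs_nonneg _)
    (pow_le_one₀ (abs_nonneg _) (abs_le.mpr ⟨by linarith [hy.2], by linarith [hy.1]⟩))

lemma continuousOn_pFq_neg_self_one (α : ℝ) :
    ContinuousOn (fun y => pFq [-α, α] [1] (1 - y)) (Icc 0 1) := by
  simp only [pFq_neg_self_one_eq_tsum]
  exact continuousOn_tsum (fun n => by fun_prop) (summable_abs_gaussTerm α le_rfl)
    fun n y hy => norm_gaussTerm_mul_pow_le α n hy

lemma hasSum_unitMellin_pFq_neg_self_one (α : ℝ) (hs : 0 < s) :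
    HasSum (fun n => gaussTerm α 0 n * unitMellin (fun y => (1 - y) ^ n) s)
      (unitMellin (fun y => pFq [-α, α] [1] (1 - y)) s) := by
  have hsummable := summable_abs_gaussTerm α le_rfl
  simp only [← unitMellin_const_mul, pFq_neg_self_one_eq_tsum]
  refine intervalIntegral.hasSum_integral_of_dominated_convergence
    (fun n y => y ^ (s - 1) * |gaussTerm α 0 n|) (fun n => ?_) (fun n => ?_)
    (ae_of_all _ fun y _ => hsummable.mul_left _) ?_ (ae_of_all _ fun y hy => ?_)
  · exact (by fun_prop : Measurable _).aestronglyMeasurable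
  · refine ae_of_all _ fun y hy => ?_
    rw [uIoc_of_le zero_le_one] at hy
    rw [norm_mul, norm_of_nonneg (rpow_nonneg hy.1.le _)]
    exact mul_le_mul_of_nonneg_left (norm_gaussTerm_mul_pow_le α n (Ioc_subset_Icc_self hy))
      (rpow_nonneg hy.1.le _)
  · simp only [tsum_mul_left]
    exact intervalIntegrable_rpow_mul continuousOn_const hs
  · rw [uIoc_of_le zero_le_one] at hy
    exact (Summable.of_norm_bounded hsummable fun n =>
      norm_gaussTerm_mul_pow_le α n (Ioc_subset_Icc_self hy)).hasSum.mul_left _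

theorem unitMellin_pFq_neg_self_one (α : ℝ) (hs : 0 < s) :
    unitMellin (fun y => pFq [-α, α] [1] (1 - y)) s = gaussMellin α s := by
  have hterm (n : ℕ) : gaussTerm α 0 n * unitMellin (fun y => (1 - y) ^ n) s =
      1 / s * gaussTerm α s n := by
    have hpos := ris_pos (show 0 < s + 1 by positivity) n
    rw [unitMellin_one_sub_pow hs, ris_succ_left, gaussTerm, gaussTerm, zero_add, ris_one]
    field_simp
  rw [← (hasSum_unitMellin_pFq_neg_self_one α hs).tsum_eq, tsum_congr hterm, tsum_mul_left,
    tsum_gaussTerm α hs, one_div, inv_mul_cancel_left₀ hs.ne']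

end GaussSeries

section HypergeometricSum

lemma pFq_perm {a a' : List ℝ} (h : a.Perm a') (b : List ℝ) (x : ℝ) : pFq a b x = pFq a' b x :=
  tsum_congr fun n => by rw [(h.map fun p => ris p n).prod_eq]

lemma Gamma_add_natCast {x : ℝ} (hx : ∀ k : ℕ, x + k ≠ 0) (n : ℕ) :
    Gamma (x + n) = ris x n * Gamma x := by
  have hris := ris_ne_zero hx n
  rw [← inv_inj, mul_inv, inv_Gamma_eq_ris_mul x n, inv_mul_cancel_left₀ hris]

lemma Gamma_sub_natCast (x : ℝ) (n : ℕ) :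
    Gamma (x - n) = Gamma x / ((-1) ^ n * ris (1 - x) n) := by
  rw [← inv_inj, inv_Gamma_sub_natCast, inv_div, div_eq_mul_inv]

lemma gaussMellin_add_natCast {α s : ℝ} (hs : ∀ k : ℕ, s + k ≠ 0)
    (hadd : ∀ k : ℕ, s + 1 + α + k ≠ 0) (hsub : ∀ k : ℕ, s + 1 - α + k ≠ 0) (n : ℕ) :
    gaussMellin α (s + n) = gaussMellin α s *
      (ris s n * ris (s + 1) n / (ris (s + 1 + α) n * ris (s + 1 - α) n)) := by
  have hs' : ∀ k : ℕ, s + 1 + k ≠ 0 := fun k => by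
    simpa only [Nat.cast_succ, add_comm (k : ℝ), ← add_assoc] using hs (k + 1)
  rw [gaussMellin, gaussMellin, add_right_comm s, add_right_comm _ _ α, add_sub_right_comm,
    Gamma_add_natCast hs, Gamma_add_natCast hs', Gamma_add_natCast hadd, Gamma_add_natCast hsub,
    div_mul_div_comm]
  congr 1 <;> ring

lemma gaussMellin_sub_natCast (α s : ℝ) (n : ℕ) :
    gaussMellin α (s - n) = gaussMellin α s *
      (ris (-s - α) n * ris (-s + α) n / (ris (1 - s) n * ris (-s) n)) := by
  have hsign : ((-1 : ℝ) ^ n) ≠ 0 := pow_ne_zero _ (by norm_num)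
  rw [gaussMellin, gaussMellin, sub_add_eq_add_sub, sub_add_eq_add_sub, sub_right_comm (s + 1),
    Gamma_sub_natCast, Gamma_sub_natCast, Gamma_sub_natCast, Gamma_sub_natCast,
    show 1 - (s + 1) = -s by ring, show 1 - (s + 1 + α) = -s - α by ring,
    show 1 - (s + 1 - α) = -s + α by ring]
  field_simp

variable {α : ℝ}

lemma gaussMellin_add_intCast_of_neg (α : ℝ) {n : ℤ} (hn : n < 0) : gaussMellin α (α + n) = 0 := by
  have hpole : Gamma (α + n + 1 - α) = 0 := by
    refine (Gamma_eq_zero_iff _).mpr ⟨(-(n + 1)).toNat, ?_⟩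
    rw [← Int.cast_natCast, Int.toNat_of_nonneg (by omega)]
    push_cast
    ring
  rw [gaussMellin, hpole, mul_zero, div_zero]

lemma gaussMellin_mul_gaussMellin_natCast (hα : ∀ n : ℤ, 2 * α ≠ n) (n : ℕ) :
    gaussMellin α (α + n) * gaussMellin α (1 / 2 - (α + n)) =
      gaussMellin α α * gaussMellin α (1 / 2 - α) *
        (ris (-1 / 2) n * (ris (2 * α - 1 / 2) n * (ris α n * ris (α + 1) n)) /
          (ris (α - 1 / 2) n * (ris (α + 1 / 2) n * ris (2 * α + 1) n)) / n.factorial) := by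
  rw [← sub_sub, gaussMellin_sub_natCast, gaussMellin_add_natCast
    (fun k h => hα (-(2 * k)) (by push_cast; linarith))
    (fun k h => hα (-(1 + k)) (by push_cast; linarith))
    (fun k => by rw [add_sub_cancel_left]; positivity),
    add_sub_cancel_left, ris_one, show α + 1 + α = 2 * α + 1 by ring,
    show -(1 / 2 - α) - α = -1 / 2 by ring, show -(1 / 2 - α) + α = 2 * α - 1 / 2 by ring,
    show 1 - (1 / 2 - α) = α + 1 / 2 by ring, show -(1 / 2 - α) = α - 1 / 2 by ring]
  ring

lemma tsum_gaussMellin_mul_gaussMellin (hα : ∀ n : ℤ, 2 * α ≠ n) :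
    ∑' n : ℤ, gaussMellin α (α + n) * gaussMellin α (1 / 2 - (α + n)) =
      gaussMellin α α * gaussMellin α (1 / 2 - α) *
        pFq [-1 / 2, 2 * α - 1 / 2, α, α + 1] [α - 1 / 2, α + 1 / 2, 2 * α + 1] 1 := by
  have hsupport : Function.support (fun n : ℤ =>
      gaussMellin α (α + n) * gaussMellin α (1 / 2 - (α + n))) ⊆ range ((↑) : ℕ → ℤ) := by
    intro n hn
    by_contra hrange
    have hneg : n < 0 := by
      by_contra hnonneg
      exact hrange ⟨n.toNat, Int.toNat_of_nonneg (not_lt.mp hnonneg)⟩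
    exact hn (by simp only [gaussMellin_add_intCast_of_neg α hneg, zero_mul])
  rw [← Nat.cast_injective.tsum_eq hsupport, pFq, ← tsum_mul_left]
  refine tsum_congr fun n => ?_
  rw [Int.cast_natCast, gaussMellin_mul_gaussMellin_natCast hα]
  simp only [List.map_cons, List.map_nil, List.prod_cons, List.prod_nil, mul_one, one_pow]

lemma exists_latticeDominated_gaussMellin (α : ℝ) : ∃ B, LatticeDominated B (gaussMellin α) :=
  ⟨_, .of_tendsto (fun N β _ n => abs_truncatedGaussMellin_add_int_le α β N n) fun _ hs =>
    tendsto_truncatedGaussMellin α fun k h => hs (-(2 * k)) (by push_cast; linarith)⟩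

lemma summable_gaussMellin_mul_gaussMellin (α : ℝ) {β : ℝ} (hβ : ∀ n : ℤ, 2 * β ≠ n) :
    Summable fun n : ℤ => gaussMellin α (β + n) * gaussMellin α (1 / 2 - (β + n)) := by
  obtain ⟨B, hB⟩ := exists_latticeDominated_gaussMellin α
  exact .of_norm_bounded ((summable_one_div_abs_add_int_mul _ _).mul_left _) (hB.abs_mul_le hB hβ)

lemma integral_sq_div_sqrt_one_sub (f : ℝ → ℝ) :
    ∫ x in (0 : ℝ)..1, f x ^ 2 / √(1 - x) =
      unitMellin (fun y => f (1 - y) * f (1 - y)) (1 / 2) := by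
  have hreflect := intervalIntegral.integral_comp_sub_left (a := 0) (b := 1)
    (fun y => f (1 - y) ^ 2 / √y) 1
  simp only [sub_sub_cancel, sub_self, sub_zero] at hreflect
  rw [hreflect]
  refine intervalIntegral.integral_congr fun y hy => ?_
  rw [uIcc_of_le zero_le_one] at hy
  simp only
  rw [show (1 / 2 - 1 : ℝ) = -(1 / 2) by norm_num, rpow_neg hy.1, ← sqrt_eq_rpow, ← sq,
    div_eq_inv_mul]

end HypergeometricSum

theorem broadhurst_laporta_integral_4F3_general {α : ℝ} (hα : ∀ n : ℤ, 2 * α ≠ n) :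
    ∫ x in (0 : ℝ)..1, pFq [-α, α] [1] x ^ 2 / √(1 - x) =
      sin (2 * (π * α)) / (4 * π) *
        (gaussMellin α α * gaussMellin α (1 / 2 - α) *
            pFq [-1 / 2, 2 * α - 1 / 2, α, α + 1] [α - 1 / 2, α + 1 / 2, 2 * α + 1] 1 -
          gaussMellin α (-α) * gaussMellin α (1 / 2 + α) *
            pFq [-1 / 2, 2 * -α - 1 / 2, -α, -α + 1] [-α - 1 / 2, -α + 1 / 2, 2 * -α + 1] 1) := by
  have hneg : ∀ n : ℤ, 2 * -α ≠ n := fun n h => hα (-n) (by push_cast; linarith)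
  have hplus := (summable_gaussMellin_mul_gaussMellin α hα).hasSum
  have hminus := (summable_gaussMellin_mul_gaussMellin α hneg).hasSum
  have hodd := hasOddLatticeSum_gaussMellin_mul_self (continuousOn_pFq_neg_self_one α)
    (fun s hs => unitMellin_pFq_neg_self_one α hs) hα
  have hsum_neg := tsum_gaussMellin_mul_gaussMellin hneg
  simp only [gaussMellin_neg, sub_neg_eq_add] at hsum_neg
  have hvalue := HasSum.unique hodd (hplus.sub hminus)
  rw [integral_sq_div_sqrt_one_sub, ← tsum_gaussMellin_mul_gaussMellin hα, ← hsum_neg, ← hvalue,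
    ← inv_div (4 * π), inv_mul_cancel_left₀]
  exact div_ne_zero (by positivity) (sin_two_pi_mul_ne_zero hα)

section ThirdConstants

lemma Gamma_two_thirds : Gamma (2 / 3) = 2 * π / (√3 * Gamma (1 / 3)) := by
  have hreflection := Gamma_mul_Gamma_one_sub (1 / 3)
  have hΓ : Gamma (1 / 3) ≠ 0 := (Gamma_pos_of_pos (by norm_num)).ne'
  rw [show (1 : ℝ) - 1 / 3 = 2 / 3 by norm_num, mul_one_div, sin_pi_div_three] at hreflection
  field_simp at hreflection ⊢
  linarith

lemma Gamma_five_sixths : Gamma (5 / 6) = 2 * π / Gamma (1 / 6) := by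
  have hreflection := Gamma_mul_Gamma_one_sub (1 / 6)
  have hΓ : Gamma (1 / 6) ≠ 0 := (Gamma_pos_of_pos (by norm_num)).ne'
  rw [show (1 : ℝ) - 1 / 6 = 5 / 6 by norm_num, mul_one_div, sin_pi_div_six] at hreflection
  field_simp at hreflection ⊢
  linarith

lemma Gamma_one_sixth_pow_three :
    Gamma (1 / 6) ^ 3 = 3 * √3 * Gamma (1 / 3) ^ 6 / (2 * (π * √π)) := by
  have hduplication := Gamma_mul_Gamma_add_half (1 / 6)
  have hΓ : Gamma (1 / 3) ≠ 0 := (Gamma_pos_of_pos (by norm_num)).ne'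
  have htwo : ((2 : ℝ) ^ (1 - 1 / 3 : ℝ)) ^ 3 = 4 := by
    rw [← rpow_natCast, ← rpow_mul (by norm_num)]
    norm_num
  have hthree : √3 ^ 3 = 3 * √3 := by rw [pow_succ, sq_sqrt (by norm_num)]
  have hpi : √π ^ 3 = π * √π := by rw [pow_succ, sq_sqrt pi_pos.le]
  rw [show (1 : ℝ) / 6 + 1 / 2 = 2 / 3 by norm_num, show 2 * ((1 : ℝ) / 6) = 1 / 3 by norm_num,
    Gamma_two_thirds] at hduplication
  have hΓ_sixth : Gamma (1 / 6) =
      Gamma (1 / 3) ^ 2 * 2 ^ (1 - 1 / 3 : ℝ) * √3 * √π / (2 * π) := by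
    field_simp at hduplication ⊢
    linarith
  rw [hΓ_sixth, div_pow, mul_pow, mul_pow, mul_pow, htwo, hthree, hpi,
    div_eq_div_iff (by positivity) (by positivity)]
  linear_combination (24 * Gamma (1 / 3) ^ 6 * √3 * π ^ 2) * sq_sqrt pi_pos.le

lemma Gamma_three_halves : Gamma (3 / 2) = √π / 2 := by
  rw [show (3 / 2 : ℝ) = 1 / 2 + 1 by norm_num, Gamma_add_one (by norm_num), Gamma_one_half_eq]
  ring

lemma gaussMellin_third_third :
    gaussMellin (1 / 3) (1 / 3) = √3 * Gamma (1 / 3) ^ 3 / (4 * π) := by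
  have hΓ : Gamma (1 / 3) ≠ 0 := (Gamma_pos_of_pos (by norm_num)).ne'
  have h_five_thirds : Gamma (5 / 3) = 2 / 3 * Gamma (2 / 3) := by
    rw [← Gamma_add_one (by norm_num)]
    norm_num
  rw [gaussMellin, Gamma_add_one (by norm_num), show (1 / 3 + 1 + 1 / 3 : ℝ) = 5 / 3 by norm_num,
    add_sub_cancel_left, Gamma_one, h_five_thirds, Gamma_two_thirds]
  field_simp
  norm_num

lemma gaussMellin_third_sixth :
    gaussMellin (1 / 3) (1 / 6) = √3 * Gamma (1 / 3) ^ 6 / (4 * π ^ 3) := by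
  have hΓ : Gamma (1 / 6) ≠ 0 := (Gamma_pos_of_pos (by norm_num)).ne'
  have hcube : gaussMellin (1 / 3) (1 / 6) = Gamma (1 / 6) ^ 3 / (6 * (π * √π)) := by
    rw [gaussMellin, Gamma_add_one (by norm_num), show (1 / 6 + 1 + 1 / 3 : ℝ) = 3 / 2 by norm_num,
      show (1 / 6 + 1 - 1 / 3 : ℝ) = 5 / 6 by norm_num, Gamma_three_halves, Gamma_five_sixths]
    field_simp
  rw [hcube, Gamma_one_sixth_pow_three]
  field_simp
  rw [sq_sqrt pi_pos.le]
  ring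

lemma gaussMellin_third_neg_third :
    gaussMellin (1 / 3) (-(1 / 3)) = -(4 * π ^ 2 / Gamma (1 / 3) ^ 3) := by
  have hΓ : Gamma (1 / 3) ≠ 0 := (Gamma_pos_of_pos (by norm_num)).ne'
  have h_neg_third : Gamma (-(1 / 3)) = -3 * Gamma (2 / 3) := by
    have hadd := Gamma_add_one (s := -(1 / 3)) (by norm_num)
    rw [show (-(1 / 3) + 1 : ℝ) = 2 / 3 by norm_num] at hadd
    linarith
  rw [gaussMellin, neg_add_cancel_comm, Gamma_one, h_neg_third,
    show (-(1 / 3) + 1 : ℝ) = 2 / 3 by norm_num, show (2 / 3 - 1 / 3 : ℝ) = 1 / 3 by norm_num,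
    Gamma_two_thirds]
  field_simp
  rw [sq_sqrt (by norm_num)]
  norm_num

lemma gaussMellin_third_five_sixths :
    gaussMellin (1 / 3) (5 / 6) = 160 * π ^ 3 / (7 * (√3 * Gamma (1 / 3) ^ 6)) := by
  have hΓ : Gamma (1 / 6) ≠ 0 := (Gamma_pos_of_pos (by norm_num)).ne'
  have hΓ' : Gamma (1 / 3) ≠ 0 := (Gamma_pos_of_pos (by norm_num)).ne'
  have h_thirteen_sixths : Gamma (13 / 6) = 7 / 36 * Gamma (1 / 6) := by
    rw [show (13 / 6 : ℝ) = 1 / 6 + 1 + 1 by norm_num, Gamma_add_one (by norm_num),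
      Gamma_add_one (by norm_num)]
    ring
  have hcube : gaussMellin (1 / 3) (5 / 6) = 240 * π ^ 2 / (7 * √π * Gamma (1 / 6) ^ 3) := by
    rw [gaussMellin, Gamma_add_one (by norm_num), show (5 / 6 + 1 + 1 / 3 : ℝ) = 13 / 6 by norm_num,
      show (5 / 6 + 1 - 1 / 3 : ℝ) = 3 / 2 by norm_num, Gamma_three_halves, h_thirteen_sixths,
      Gamma_five_sixths]
    field_simp
    norm_num
  rw [hcube, Gamma_one_sixth_pow_three]
  field_simp
  norm_num

lemma sin_mul_gaussMellin_third_third :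
    sin (2 * (π * (1 / 3))) / (4 * π) *
        (gaussMellin (1 / 3) (1 / 3) * gaussMellin (1 / 3) (1 / 2 - 1 / 3)) =
      3 / √π * (√3 / 128 * (Gamma (1 / 3) / √π) ^ 9) := by
  have hpi : √π ^ 10 = π ^ 5 := by rw [pow_mul √π 2 5, sq_sqrt pi_pos.le]
  rw [show (1 / 2 - 1 / 3 : ℝ) = 1 / 6 by norm_num, gaussMellin_third_third,
    gaussMellin_third_sixth, show 2 * (π * (1 / 3)) = π - π / 3 by ring, sin_pi_sub,
    sin_pi_div_three]
  field_simp
  rw [hpi, sq_sqrt (by norm_num)]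
  ring

lemma sin_mul_gaussMellin_third_neg_third :
    sin (2 * (π * (1 / 3))) / (4 * π) *
        (gaussMellin (1 / 3) (-(1 / 3)) * gaussMellin (1 / 3) (1 / 2 + 1 / 3)) =
      -(3 / √π * (80 / 21 * (√π / Gamma (1 / 3)) ^ 9)) := by
  have hpi : √π ^ 8 = π ^ 4 := by rw [pow_mul √π 2 4, sq_sqrt pi_pos.le]
  have hΓ : Gamma (1 / 3) ≠ 0 := (Gamma_pos_of_pos (by norm_num)).ne'
  rw [show (1 / 2 + 1 / 3 : ℝ) = 5 / 6 by norm_num, gaussMellin_third_neg_third,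
    gaussMellin_third_five_sixths, show 2 * (π * (1 / 3)) = π - π / 3 by ring, sin_pi_sub,
    sin_pi_div_three]
  field_simp
  rw [hpi]
  ring

end ThirdConstants

theorem broadhurst_laporta_integral_4F3 :
    (∫ x in (0:ℝ)..1, (pFq [-1/3, 1/3] [1] x)^2 / Real.sqrt (1 - x))
    = (3 / Real.sqrt π) *
        ((Real.sqrt 3 / 128) * (Gamma (1/3) / Real.sqrt π)^9 *
            pFq [-1/2, 1/6, 1/3, 4/3] [-1/6, 5/6, 5/3] 1
          + (80/21) * (Real.sqrt π / Gamma (1/3))^9 *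
            pFq [-7/6, -1/2, -1/3, 2/3] [-5/6, 1/6, 1/3] 1) := by
  have hα (n : ℤ) : 2 * (1 / 3 : ℝ) ≠ n := fun h => by
    have hint : (2 : ℤ) = 3 * n := by
      exact_mod_cast (by linarith : (2 : ℝ) = 3 * n)
    omega
  have hgeneral := broadhurst_laporta_integral_4F3_general hα
  rw [mul_sub, ← mul_assoc, ← mul_assoc (_ / _) (gaussMellin _ (-_) * _),
    sin_mul_gaussMellin_third_third, sin_mul_gaussMellin_third_neg_third,
    pFq_perm (.swap (2 * -(1 / 3) - 1 / 2) (-1 / 2) _)] at hgeneral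
  -- `ring_nf` also evaluates the rational parameters inside `pFq`.
  linear_combination (norm := ring_nf) hgeneral
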